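/- Let A and B be two semilocal Noetherian commutative rings containing a field k such that the completed tensor product A⊗̂_k B is Noetherian. If A and B are Cohen–Macaulay rings (i.e. the localization of A at each of its maximal ideals and the localization of B at each of its maximal ideals are Cohen–Macaulay local rings), then A⊗̂_k B is a Cohen–Macaulay ring. -/

import Mathlib

open TensorProduct

/-- The ideal `r = m ⊗ B + A ⊗ n` of `C = A ⊗[k] B`, where `m` and `n` are the Jacobson
radicals of `A` and `B` (for a local ring, the Jacobson radical is the maximal ideal). -/
noncomputable def tensorRadical (k A B : Type*) [Field k] [CommRing A] [CommRing B]
    [Algebra k A] [Algebra k B] : Ideal (A ⊗[k] B) :=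
  Ideal.map (Algebra.TensorProduct.includeLeft (R := k) (S := k) (A := A) (B := B))
      ((⊥ : Ideal A).jacobson) ⊔
    Ideal.map (Algebra.TensorProduct.includeRight (R := k) (A := A) (B := B))
      ((⊥ : Ideal B).jacobson)

/-- The completed tensor product `A ⊗̂[k] B`: the `r`-adic separated completion of
`C = A ⊗[k] B`, i.e. the inverse limit of the rings `C ⧸ r ^ i`. -/
noncomputable abbrev CompletedTensor (k A B : Type*) [Field k] [CommRing A] [CommRing B]
    [Algebra k A] [Algebra k B] : Type _ :=
  AdicCompletion (tensorRadical k A B) (A ⊗[k] B)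

open RingTheory.Sequence in
/-- A Noetherian local ring is Cohen–Macaulay iff its depth equals its Krull dimension,
equivalently (since the depth is the maximal length of a regular sequence in the maximal
ideal, and depth ≤ dimension always holds) iff there is a regular sequence contained in
the maximal ideal whose length is the Krull dimension of the ring. -/
def IsCohenMacaulayLocalRing (R : Type*) [CommRing R] [IsLocalRing R] : Prop :=
  ∃ rs : List R, (∀ x ∈ rs, x ∈ IsLocalRing.maximalIdeal R) ∧ IsRegular R rs ∧
    (rs.length : WithBot ℕ∞) = ringKrullDim R

/-- A commutative ring is Cohen–Macaulay if its localization at every maximal ideal is a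
Cohen–Macaulay local ring. -/
def IsCohenMacaulayRing (R : Type*) [CommRing R] : Prop :=
  ∀ (P : Ideal R) (hP : P.IsMaximal),
    haveI : P.IsPrime := hP.isPrime
    IsCohenMacaulayLocalRing (Localization.AtPrime P)

/-!
Let `E` be the completion of `A ⊗[k] B`, let `Q` be a maximal ideal of `E`, and let `p`, `q` be its
preimages in `A` and `B`, which are maximal because they contain the Jacobson radicals. The
Cohen–Macaulay property ascends along a flat local homomorphism whose closed fibre is
Cohen–Macaulay, and it is applied twice: to `A → E`, whose fibre over `p` is `E ⧸ pE`, and to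
`B → E ⧸ pE`, whose fibre over `q` is the tensor product of the fields `A ⧸ p` and `B ⧸ q`.

Both maps are flat because they are limits of flat base changes such as
`A ⧸ m ^ s → A ⧸ m ^ s ⊗[k] B ⧸ n ^ s`: a linear relation in `E` is trivial modulo every power of
the radical, Artin–Rees replaces the syzygies modulo `m ^ (s + c)` by true syzygies up to `m ^ s`,
and Krull's intersection theorem concludes.

A Noetherian tensor product of fields `L ⊗[k] K` is Cohen–Macaulay: for a transcendence basis `x` of
`K` over `k` and a prime `Q`, finitely many `x i` generate a polynomial ring over `L` that maps
flatly to `L ⊗[k] K` with `Q` minimal in its fibre, and polynomial rings over a field are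
Cohen–Macaulay.
-/

section LocalRing

open RingTheory.Sequence IsLocalRing

section Basic

variable {R S : Type*} [CommRing R] [IsLocalRing R] [CommRing S] [IsLocalRing S]

theorem ringKrullDim_quotient_eq_zero_iff {I : Ideal R} :
    ringKrullDim (R ⧸ I) = 0 ↔ maximalIdeal R ∈ I.minimalPrimes := by
  constructor
  · intro h
    have hI : I ≠ ⊤ := by
      rintro rfl
      have := ringKrullDim_eq_bot_of_subsingleton (R := R ⧸ (⊤ : Ideal R))
      simp_all
    obtain ⟨P, hP, -⟩ := Ideal.exists_minimalPrimes_le (le_maximalIdeal hI)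
    have hmax := Ideal.krullDimLE_zero_quotient_iff_forall_minimalPrimes_isMaximal.mp
      (Ring.krullDimLE_iff.mpr h.le) P hP
    rwa [← eq_maximalIdeal hmax]
  · intro h
    have : Nontrivial (R ⧸ I) :=
      Ideal.Quotient.nontrivial_iff.mpr (ne_top_of_le_ne_top Ideal.IsPrime.ne_top' h.1.2)
    refine ringKrullDimZero_iff_ringKrullDim_eq_zero.mp <|
      Ideal.krullDimLE_zero_quotient_iff_forall_minimalPrimes_isMaximal.mpr fun P hP ↦ ?_
    rw [(h.2 hP.1 (le_maximalIdeal hP.1.1.ne_top)).antisymm' (le_maximalIdeal hP.1.1.ne_top)]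
    infer_instance

theorem isCohenMacaulayLocalRing_iff_exists_isWeaklyRegular [IsNoetherianRing R] :
    IsCohenMacaulayLocalRing R ↔ ∃ rs : List R,
      IsWeaklyRegular R rs ∧ maximalIdeal R ∈ (Ideal.ofList rs).minimalPrimes := by
  simp only [← ringKrullDim_quotient_eq_zero_iff]
  constructor
  · rintro ⟨rs, -, hreg, hdim⟩
    refine ⟨rs, hreg.toIsWeaklyRegular, ENat.WithBot.add_natCast_cancel (c := rs.length) |>.mp ?_⟩
    rw [ringKrullDim_add_length_eq_ringKrullDim_of_isRegular rs hreg, hdim, zero_add]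
  · rintro ⟨rs, hreg, hdim⟩
    have hmem : ∀ x ∈ rs, x ∈ maximalIdeal R := fun x hx ↦
      (ringKrullDim_quotient_eq_zero_iff.mp hdim).1.2 (Ideal.subset_span hx)
    have hreg' := IsRegular.of_isWeaklyRegular_of_mem_maximalIdeal R hmem hreg
    refine ⟨rs, hmem, hreg', ?_⟩
    rw [← ringKrullDim_add_length_eq_ringKrullDim_of_isRegular rs hreg', hdim, zero_add]

theorem IsCohenMacaulayLocalRing.of_ringEquiv (e : R ≃+* S) (h : IsCohenMacaulayLocalRing R) :
    IsCohenMacaulayLocalRing S := by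
  obtain ⟨rs, hmem, hreg, hdim⟩ := h
  refine ⟨rs.map e, ?_, ?_, ?_⟩
  · simpa using hmem
  · refine (AddEquiv.isRegular_congr (e := e.toAddEquiv) ?_).mp hreg
    exact List.forall₂_map_right_iff.mpr <| List.forall₂_same.mpr fun r _ x ↦ map_mul e r x
  · rw [List.length_map, hdim, ringKrullDim_eq_of_ringEquiv e]

theorem IsCohenMacaulayLocalRing.of_ringKrullDim_eq_zero (h : ringKrullDim R = 0) :
    IsCohenMacaulayLocalRing R :=
  ⟨[], by simp, .nil R R, by simp [h]⟩

theorem IsCohenMacaulayLocalRing.of_isDomain_of_ringKrullDim_le_one [IsDomain R]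
    (h : ringKrullDim R ≤ 1) : IsCohenMacaulayLocalRing R := by
  by_cases hR : IsField R
  · exact of_ringKrullDim_eq_zero (ringKrullDim_eq_zero_of_isField hR)
  obtain ⟨x, hx, hx0⟩ :=
    Submodule.exists_mem_ne_zero_of_ne_bot (mt isField_iff_maximalIdeal_eq.mpr hR)
  have hreg : IsRegular R [x] :=
    .of_isWeaklyRegular_of_mem_maximalIdeal R (by simpa using hx) <|
      (isWeaklyRegular_singleton_iff R x).mpr (.of_ne_zero hx0)
  refine ⟨[x], by simpa using hx, hreg, le_antisymm ?_ (by simpa using h)⟩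
  have : Nontrivial (R ⧸ Ideal.span {x}) := Ideal.Quotient.nontrivial_iff.mpr (by simpa using hx)
  calc (1 : WithBot ℕ∞) ≤ ringKrullDim (R ⧸ Ideal.span {x}) + 1 :=
        le_add_of_nonneg_left ringKrullDim_nonneg_of_nontrivial
    _ ≤ ringKrullDim R :=
        ringKrullDim_quotient_succ_le_of_nonZeroDivisor (mem_nonZeroDivisors_of_ne_zero hx0)

end Basic

section FlatAscent

theorem isWeaklyRegular_of_exact {S M₁ M₂ M₃ : Type*} [CommRing S] [AddCommGroup M₁]
    [AddCommGroup M₂] [AddCommGroup M₃] [Module S M₁] [Module S M₂] [Module S M₃] {rs : List S}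
    {f : M₁ →ₗ[S] M₂} {g : M₂ →ₗ[S] M₃} (hf : Function.Injective f) (hfg : Function.Exact f g)
    (hg : Function.Surjective g) (h₁ : IsWeaklyRegular M₁ rs) (h₃ : IsWeaklyRegular M₃ rs) :
    IsWeaklyRegular M₂ rs := by
  induction rs generalizing M₁ M₂ M₃ with
  | nil => simp
  | cons r rs ih =>
    rw [isWeaklyRegular_cons_iff] at h₁ h₃ ⊢
    have hzero : Function.Exact (0 : M₁ →ₗ[S] M₁) f :=
      (LinearMap.exact_zero_iff_injective M₁ f).mpr hf
    have hinj : Function.Injective (QuotSMulTop.map r f) := by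
      have := QuotSMulTop.map_first_exact_on_four_term_exact_of_isSMulRegular_last hzero hfg h₃.1
      rwa [map_zero, LinearMap.exact_zero_iff_injective] at this
    exact ⟨isSMulRegular_of_range_eq_ker hf hfg.linearMap_ker_eq.symm h₁.1 h₃.1,
      ih hinj (QuotSMulTop.map_exact r hfg hg) (QuotSMulTop.map_surjective r hg) h₁.2 h₃.2⟩

variable {R S F : Type*} [CommRing R] [IsLocalRing R] [CommRing S] [Algebra R S] [Module.Flat R S]

theorem isWeaklyRegular_tensorProduct_of_isFiniteLength {rs : List S}
    (h : IsWeaklyRegular (S ⊗[R] (R ⧸ maximalIdeal R)) rs)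
    {N : Type*} [AddCommGroup N] [Module R N] (hN : IsFiniteLength R N) :
    IsWeaklyRegular (S ⊗[R] N) rs := by
  induction hN with
  | of_subsingleton => exact ⟨fun _ _ _ _ _ ↦ Subsingleton.elim _ _⟩
  | @of_simple_quotient M _ _ N _ _ ih =>
    have hquot : IsWeaklyRegular (S ⊗[R] (M ⧸ N)) rs := by
      obtain ⟨I, hI, ⟨e⟩⟩ := isSimpleModule_iff_quot_maximal.mp ‹IsSimpleModule R (M ⧸ N)›
      obtain rfl := eq_maximalIdeal hI
      exact ((AlgebraTensorModule.congr (.refl S S) e).isWeaklyRegular_congr rs).mpr h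
    exact isWeaklyRegular_of_exact (f := AlgebraTensorModule.lTensor S S N.subtype)
      (g := AlgebraTensorModule.lTensor S S N.mkQ)
      (Module.Flat.lTensor_preserves_injective_linearMap _ N.injective_subtype)
      (lTensor_exact S (LinearMap.exact_subtype_mkQ N) N.mkQ_surjective)
      (LinearMap.lTensor_surjective S N.mkQ_surjective) ih hquot

variable [CommRing F] [Algebra S F]

theorem isWeaklyRegular_append_of_flat [IsNoetherianRing R]
    (hsurj : Function.Surjective (algebraMap S F))
    (hker : RingHom.ker (algebraMap S F) = (maximalIdeal R).map (algebraMap R S))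
    {xs : List R} (hxs : IsWeaklyRegular R xs)
    (hmin : maximalIdeal R ∈ (Ideal.ofList xs).minimalPrimes)
    {ys : List S} (hys : IsWeaklyRegular F ys) :
    IsWeaklyRegular S (xs.map (algebraMap R S) ++ ys) := by
  have hfiber : IsWeaklyRegular (S ⊗[R] (R ⧸ maximalIdeal R)) ys :=
    let e₁ := (Algebra.TensorProduct.quotIdealMapEquivTensorQuot S (maximalIdeal R)).toLinearEquiv
    let e₂ := Submodule.quotEquivOfEq _ (Algebra.linearMap S F).ker hker.symm
    let e₃ := (Algebra.linearMap S F).quotKerEquivOfSurjective hsurj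
    ((e₁.symm ≪≫ₗ e₂ ≪≫ₗ e₃).isWeaklyRegular_congr ys).mpr hys
  have hlength : IsFiniteLength R (R ⧸ Ideal.ofList xs) := by
    have := quotient_artinian_of_mem_minimalPrimes_of_isLocalRing _ hmin
    exact isFiniteLength_iff_isNoetherian_isArtinian.mpr ⟨inferInstance,
      isArtinian_of_surjective_algebraMap (R := R ⧸ Ideal.ofList xs) Ideal.Quotient.mk_surjective⟩
  refine (isWeaklyRegular_append_iff S _ _).mpr ⟨hxs.of_flat, ?_⟩
  let e₁ := (Algebra.TensorProduct.quotIdealMapEquivTensorQuot S (Ideal.ofList xs)).toLinearEquiv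
  let e₂ : (S ⧸ (Ideal.ofList xs).map (algebraMap R S)) ≃ₗ[S]
      (S ⧸ (Ideal.ofList (xs.map (algebraMap R S)) • ⊤ : Submodule S S)) :=
    Submodule.quotEquivOfEq _ _ (by simp [Ideal.map_ofList])
  exact ((e₁.symm ≪≫ₗ e₂).isWeaklyRegular_congr ys).mp
    (isWeaklyRegular_tensorProduct_of_isFiniteLength hfiber hlength)

variable [IsNoetherianRing R] [IsLocalRing S] [IsNoetherianRing S] [IsLocalRing F]

theorem IsCohenMacaulayLocalRing.of_flat [IsLocalHom (algebraMap R S)]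
    (hsurj : Function.Surjective (algebraMap S F))
    (hker : RingHom.ker (algebraMap S F) = (maximalIdeal R).map (algebraMap R S))
    (hR : IsCohenMacaulayLocalRing R) (hF : IsCohenMacaulayLocalRing F) :
    IsCohenMacaulayLocalRing S := by
  have : IsNoetherianRing F := isNoetherianRing_of_surjective S F _ hsurj
  rw [isCohenMacaulayLocalRing_iff_exists_isWeaklyRegular] at hR hF ⊢
  obtain ⟨xs, hxs, hxmin⟩ := hR
  obtain ⟨_, hys, hymin⟩ := hF
  obtain ⟨ys, rfl⟩ := List.map_surjective_iff.mpr hsurj ‹List F›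
  rw [isWeaklyRegular_map_algebraMap_iff] at hys
  have : IsLocalHom (algebraMap S F) := hsurj.isLocalHom
  have hymem : Ideal.ofList ys ≤ maximalIdeal S := by
    rw [← maximalIdeal_comap (algebraMap S F), ← Ideal.map_le_iff_le_comap, Ideal.map_ofList]
    exact hymin.1.2
  have hxmem : (maximalIdeal R).map (algebraMap R S) ≤ maximalIdeal S :=
    map_maximalIdeal_le _
  refine ⟨_, isWeaklyRegular_append_of_flat hsurj hker hxs hxmin hys, ?_⟩
  rw [Ideal.ofList_append, ← Ideal.map_ofList]
  refine ⟨⟨inferInstance, sup_le ((Ideal.map_mono hxmin.1.2).trans hxmem) hymem⟩, ?_⟩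
  rintro P ⟨hP, hle⟩ -
  have hPR := hP.comap (algebraMap R S)
  have hxP : maximalIdeal R ≤ P.comap (algebraMap R S) :=
    hxmin.2 ⟨hPR, Ideal.map_le_iff_le_comap.mp (le_sup_left.trans hle)⟩
      (le_maximalIdeal hPR.ne_top)
  have hkerP : RingHom.ker (algebraMap S F) ≤ P := hker ▸ Ideal.map_le_iff_le_comap.mpr hxP
  have hymin' := Ideal.minimalPrimes_comap_of_surjective hsurj hymin
  rw [← Ideal.map_ofList, Ideal.comap_map_of_surjective _ hsurj, ← RingHom.ker_eq_comap_bot,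
    maximalIdeal_comap] at hymin'
  exact hymin'.2 ⟨hP, sup_le (le_sup_right.trans hle) hkerP⟩ (le_maximalIdeal hP.ne_top)

end FlatAscent

end LocalRing

section LocalizationAtPrime

open IsLocalRing

theorem ker_localRingHom_of_surjective {S F : Type*} [CommRing S] [CommRing F] {φ : S →+* F}
    (hφ : Function.Surjective φ) (Q : Ideal F) [Q.IsPrime] :
    RingHom.ker (Localization.localRingHom (Q.comap φ) Q φ rfl) =
      (RingHom.ker φ).map (algebraMap S (Localization.AtPrime (Q.comap φ))) :=
  IsLocalization.ker_map _ φ (Ideal.map_primeCompl_comap_of_surjective φ hφ Q)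

theorem isCohenMacaulayLocalRing_localization_of_mem_minimalPrimes {R : Type*} [CommRing R]
    {Q : Ideal R} [Q.IsPrime]
    (hQ : Q ∈ minimalPrimes R) :
    IsCohenMacaulayLocalRing (Localization.AtPrime Q) := by
  refine .of_ringKrullDim_eq_zero ?_
  rw [IsLocalization.AtPrime.ringKrullDim_eq_height Q, Ideal.height_eq_zero_iff.mpr hQ]
  rfl

variable {R S F : Type*} [CommRing R] [IsNoetherianRing R] [CommRing S] [IsNoetherianRing S]
  [CommRing F] {f : R →+* S} {φ : S →+* F}

theorem isCohenMacaulayLocalRing_localization_comap_of_flat (hf : f.Flat)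
    (hφ : Function.Surjective φ) (Q : Ideal F) [Q.IsPrime]
    (hker : RingHom.ker φ = ((Q.comap φ).comap f).map f)
    (hR : IsCohenMacaulayLocalRing (Localization.AtPrime ((Q.comap φ).comap f)))
    (hF : IsCohenMacaulayLocalRing (Localization.AtPrime Q)) :
    IsCohenMacaulayLocalRing (Localization.AtPrime (Q.comap φ)) := by
  algebraize [Localization.localRingHom ((Q.comap φ).comap f) (Q.comap φ) f rfl,
    Localization.localRingHom (Q.comap φ) Q φ rfl]
  have : Module.Flat (Localization.AtPrime ((Q.comap φ).comap f))
      (Localization.AtPrime (Q.comap φ)) := hf.localRingHom _ _ rfl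
  have : IsLocalHom (algebraMap (Localization.AtPrime ((Q.comap φ).comap f))
      (Localization.AtPrime (Q.comap φ))) := Localization.isLocalHom_localRingHom _ _ _ rfl
  refine .of_flat ?_ ?_ hR hF
  · exact (RingHom.surjectiveOnStalks_of_surjective hφ).localRingHom_surjective _ _ rfl
  · refine (ker_localRingHom_of_surjective hφ Q).trans ?_
    rw [hker, ← Localization.AtPrime.map_eq_maximalIdeal, Ideal.map_map, Ideal.map_map]
    congr 1
    ext x
    exact (Localization.localRingHom_to_map _ _ _ rfl x).symm

theorem isCohenMacaulayLocalRing_localization_of_flat (hf : f.Flat) (hφ : Function.Surjective φ)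
    (Q : Ideal S) [Q.IsPrime] (hker : RingHom.ker φ = (Q.comap f).map f)
    (hR : IsCohenMacaulayLocalRing (Localization.AtPrime (Q.comap f)))
    (hF : ∀ (Q' : Ideal F) [Q'.IsPrime], Q'.comap φ = Q →
      IsCohenMacaulayLocalRing (Localization.AtPrime Q')) :
    IsCohenMacaulayLocalRing (Localization.AtPrime Q) := by
  have hkerQ : RingHom.ker φ ≤ Q := hker ▸ Ideal.map_comap_le
  have hQ' : (Q.map φ).IsPrime := Ideal.map_isPrime_of_surjective hφ hkerQ
  have hQ : (Q.map φ).comap φ = Q := by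
    rw [Ideal.comap_map_of_surjective φ hφ, ← RingHom.ker_eq_comap_bot, sup_eq_left.mpr hkerQ]
  generalize Q.map φ = Q' at hQ hQ'
  subst hQ
  exact isCohenMacaulayLocalRing_localization_comap_of_flat hf hφ Q' hker hR (hF Q' rfl)

theorem isCohenMacaulayLocalRing_localization_of_flat_of_mem_minimalPrimes (hf : f.Flat)
    {Q : Ideal S} [Q.IsPrime] (hQ : Q ∈ ((Q.comap f).map f).minimalPrimes)
    (hR : IsCohenMacaulayLocalRing (Localization.AtPrime (Q.comap f))) :
    IsCohenMacaulayLocalRing (Localization.AtPrime Q) := by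
  refine isCohenMacaulayLocalRing_localization_of_flat hf Ideal.Quotient.mk_surjective Q
    Ideal.mk_ker hR fun Q' _ hQ' ↦ isCohenMacaulayLocalRing_localization_of_mem_minimalPrimes ?_
  rw [Ideal.minimalPrimes_eq_comap] at hQ
  obtain ⟨P, hP, hPQ⟩ := hQ
  rwa [Ideal.comap_injective_of_surjective _ Ideal.Quotient.mk_surjective (hQ'.trans hPQ.symm)]

end LocalizationAtPrime

section PolynomialRing

open scoped Polynomial

/-- Cohen–Macaulayness of the localizations at all prime ideals. It is equivalent to
`IsCohenMacaulayRing` for Noetherian rings, but unlike the latter it passes to polynomial rings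
without knowing that localizations of Cohen–Macaulay local rings are Cohen–Macaulay. -/
def IsCohenMacaulayAtPrimes (R : Type*) [CommRing R] : Prop :=
  ∀ (P : Ideal R) [P.IsPrime], IsCohenMacaulayLocalRing (Localization.AtPrime P)

namespace IsCohenMacaulayAtPrimes

variable {R S : Type*} [CommRing R] [CommRing S]

theorem of_field (K : Type*) [Field K] : IsCohenMacaulayAtPrimes K := fun P _ ↦
  isCohenMacaulayLocalRing_localization_of_mem_minimalPrimes
    (Ideal.mem_minimalPrimes_of_krullDimLE_zero P)

theorem of_ringEquiv (e : R ≃+* S) (h : IsCohenMacaulayAtPrimes R) :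
    IsCohenMacaulayAtPrimes S := fun P _ ↦
  .of_ringEquiv (IsLocalization.ringEquivOfRingEquiv _ _ e (e.map_primeCompl_comap_eq P))
    (h (P.comap e))

end IsCohenMacaulayAtPrimes

variable {R : Type*} [CommRing R]

attribute [local instance] Polynomial.algebra Polynomial.isLocalization in
theorem height_le_one_of_comap_C_eq_bot [IsDomain R] (Q : Ideal R[X]) [Q.IsPrime]
    (hQ : Q.comap Polynomial.C = ⊥) : Q.height ≤ 1 := by
  let K := FractionRing R
  have hdisj : Disjoint ((nonZeroDivisors R).map Polynomial.C : Set R[X]) (Q : Set R[X]) := by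
    rw [Set.disjoint_left]
    rintro _ ⟨r, hr, rfl⟩ hrQ
    have : r ∈ Q.comap Polynomial.C := hrQ
    rw [hQ, Ideal.mem_bot] at this
    exact nonZeroDivisors.ne_zero hr this
  have hprime := IsLocalization.isPrime_of_isPrime_disjoint _ K[X] Q ‹_› hdisj
  rw [← IsLocalization.height_map_of_disjoint (S := K[X]) _ Q hdisj, ← WithBot.coe_le_coe]
  calc _ ≤ ringKrullDim K[X] := Ideal.height_le_ringKrullDim_of_ne_top hprime.ne_top
    _ ≤ 1 := Ring.krullDimLE_iff.mp inferInstance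

variable [IsNoetherianRing R]

theorem IsCohenMacaulayAtPrimes.polynomial (h : IsCohenMacaulayAtPrimes R) :
    IsCohenMacaulayAtPrimes R[X] := by
  intro Q _
  let φ := Polynomial.mapRingHom (Ideal.Quotient.mk (Q.comap Polynomial.C))
  have hφ : Function.Surjective φ := Polynomial.map_surjective _ Ideal.Quotient.mk_surjective
  have hker : RingHom.ker φ = (Q.comap Polynomial.C).map Polynomial.C := by
    rw [Polynomial.ker_mapRingHom, Ideal.mk_ker]
  have hflat : (Polynomial.C : R →+* R[X]).Flat :=
    RingHom.flat_algebraMap_iff.mpr (inferInstance : Module.Flat R R[X])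
  refine isCohenMacaulayLocalRing_localization_of_flat hflat hφ Q hker (h _) fun Q' _ hQ' ↦ ?_
  refine .of_isDomain_of_ringKrullDim_le_one ?_
  rw [IsLocalization.AtPrime.ringKrullDim_eq_height Q', ← WithBot.coe_one, WithBot.coe_le_coe]
  refine height_le_one_of_comap_C_eq_bot Q' (eq_bot_iff.mpr fun d hd ↦ ?_)
  obtain ⟨d, rfl⟩ := Ideal.Quotient.mk_surjective d
  rw [Ideal.mem_bot, Ideal.Quotient.eq_zero_iff_mem]
  change Polynomial.C d ∈ Q
  rw [← hQ', Ideal.mem_comap, Polynomial.coe_mapRingHom, Polynomial.map_C]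
  exact hd

theorem IsCohenMacaulayAtPrimes.mvPolynomial (h : IsCohenMacaulayAtPrimes R) {ι : Type*}
    [Finite ι] : IsCohenMacaulayAtPrimes (MvPolynomial ι R) := by
  induction ι using Finite.induction_empty_option with
  | of_equiv e ih => exact ih.of_ringEquiv (MvPolynomial.renameEquiv _ e).toRingEquiv
  | h_empty => exact h.of_ringEquiv (MvPolynomial.isEmptyRingEquiv R _).symm
  | h_option ih =>
    exact ih.polynomial.of_ringEquiv (MvPolynomial.optionEquivLeft _ _).toRingEquiv.symm

end PolynomialRing

section TensorProductOfFields

theorem le_of_comap_le_of_exists_isIntegralElem_mul {R S : Type*} [CommRing R] [CommRing S]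
    {f : R →+* S} (hf : ∀ z, ∃ r, IsUnit (f r) ∧ f.IsIntegralElem (f r * z))
    {P Q : Ideal S} [P.IsPrime] (hPQ : P ≤ Q) (h : Q.comap f ≤ P.comap f) : Q ≤ P := by
  algebraize [f]
  intro z hzQ
  by_contra hzP
  obtain ⟨r, hr, hint⟩ := hf z
  have hmem : f r * z ∈ (Q : Set S) \ P :=
    ⟨Q.mul_mem_left _ hzQ, mt (Ideal.unit_mul_mem_iff_mem P hr).mp hzP⟩
  exact (Ideal.comap_lt_comap_of_integral_mem_sdiff (R := R) hPQ hmem hint).not_ge h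

theorem exists_finset_map_le_map_comap_rename {ι R S : Type*} [CommRing R] [CommRing S]
    [IsNoetherianRing S] (g : MvPolynomial ι R →+* S) (J : Ideal (MvPolynomial ι R)) :
    ∃ V : Finset ι, J.map g ≤
      (J.comap (MvPolynomial.rename ((↑) : V → ι)).toRingHom).map
        (g.comp (MvPolynomial.rename ((↑) : V → ι)).toRingHom) := by
  classical
  obtain ⟨s, hs, hspan⟩ := (Submodule.fg_span_iff_fg_span_finset_subset (g '' J)).mp
    (IsNoetherian.noetherian (J.map g))
  obtain ⟨T, hT, rfl⟩ := Finset.subset_set_image_iff.mp hs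
  refine ⟨T.biUnion MvPolynomial.vars, hspan.trans_le (Submodule.span_le.mpr ?_)⟩
  rw [Finset.coe_image]
  rintro _ ⟨t, ht, rfl⟩
  obtain ⟨t, rfl⟩ := MvPolynomial.exists_rename_eq_of_vars_subset_range t
    ((↑) : T.biUnion MvPolynomial.vars → ι) Subtype.val_injective fun i hi ↦
      ⟨⟨i, Finset.mem_biUnion.mpr ⟨t, ht, hi⟩⟩, rfl⟩
  exact Ideal.mem_map_of_mem (g.comp _) (hT ht)

variable {k L K ι : Type*} [Field k] [Field L] [Field K] [Algebra k L] [Algebra k K] {x : ι → K}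

theorem flat_aeval_of_algebraicIndependent (hx : AlgebraicIndependent k x) :
    (MvPolynomial.aeval (R := k) x).Flat := by
  have hinj : Function.Injective (MvPolynomial.aeval (R := k) x).toRingHom := hx
  have hfac : (MvPolynomial.aeval (R := k) x).toRingHom =
      (IsFractionRing.lift hinj).comp (algebraMap _ (FractionRing (MvPolynomial ι k))) := by
    refine RingHom.ext fun p ↦ ?_
    rw [RingHom.comp_apply, IsFractionRing.lift_algebraMap]
  have hloc : (algebraMap (MvPolynomial ι k) (FractionRing (MvPolynomial ι k))).Flat :=
    RingHom.flat_algebraMap_iff.mpr (IsLocalization.flat _ (nonZeroDivisors _))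
  exact hfac ▸ hloc.comp (.of_isField (Field.toIsField _) _)

variable (L) in
theorem flat_aeval_one_tmul_of_algebraicIndependent (hx : AlgebraicIndependent k x) :
    (MvPolynomial.aeval (R := L) fun i ↦ (1 : L) ⊗ₜ[k] x i).Flat := by
  have hfac : (MvPolynomial.aeval (R := L) fun i ↦ (1 : L) ⊗ₜ[k] x i) =
      (Algebra.TensorProduct.map (.id L L) (MvPolynomial.aeval (R := k) x)).comp
        (MvPolynomial.algebraTensorAlgEquiv k L).symm.toAlgHom :=
    MvPolynomial.algHom_ext fun i ↦ by simp
  rw [hfac]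
  exact RingHom.Flat.comp (.of_bijective (AlgEquiv.bijective _)) <|
    .tensorProductMap (f := .id L L) (.id _) (flat_aeval_of_algebraicIndependent hx)

theorem exists_aeval_ne_zero_and_isIntegralElem_aeval_mul (hx : IsTranscendenceBasis k x) (a : K) :
    ∃ p : MvPolynomial ι k, MvPolynomial.aeval x p ≠ 0 ∧
      (MvPolynomial.aeval (R := k) x).toRingHom.IsIntegralElem (MvPolynomial.aeval x p * a) := by
  have := hx.isAlgebraic
  obtain ⟨b, hb, hba⟩ := (Algebra.IsAlgebraic.isAlgebraic
    (R := Algebra.adjoin k (Set.range x)) a).exists_integral_multiple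
  obtain ⟨p, rfl⟩ := hx.1.aevalEquiv.surjective b
  rw [Algebra.smul_def, hx.1.algebraMap_aevalEquiv] at hba
  refine ⟨p, (map_ne_zero_iff _ hx.1).mpr
    (mt (map_eq_zero_iff _ hx.1.aevalEquiv.injective).mpr hb), ?_⟩
  refine .of_comp (f := hx.1.aevalEquiv.symm.toAlgHom.toRingHom) ?_
  have hcomp : (MvPolynomial.aeval (R := k) x).toRingHom.comp
      hx.1.aevalEquiv.symm.toAlgHom.toRingHom = algebraMap _ K := by
    refine RingHom.ext fun b ↦ ?_
    obtain ⟨q, rfl⟩ := hx.1.aevalEquiv.surjective b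
    simp
  exact hcomp ▸ hba

theorem exists_isUnit_and_isIntegralElem_aeval_one_tmul (hx : IsTranscendenceBasis k x)
    (z : L ⊗[k] K) :
    let f := (MvPolynomial.aeval (R := L) fun i ↦ (1 : L) ⊗ₜ[k] x i).toRingHom
    ∃ p, IsUnit (f p) ∧ f.IsIntegralElem (f p * z) := by
  intro f
  have hf : f.comp (MvPolynomial.map (algebraMap k L)) =
      (Algebra.TensorProduct.includeRight (R := k) (A := L)).toRingHom.comp
        (MvPolynomial.aeval (R := k) x).toRingHom :=
    RingHom.ext fun p ↦ (MvPolynomial.aeval_map_algebraMap L _ p).trans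
      (MvPolynomial.aeval_one_tmul k x p)
  induction z with
  | zero => exact ⟨1, by simp, by simpa using RingHom.isIntegralElem_zero f⟩
  | add z w hz hw =>
    obtain ⟨p, hp, hpz⟩ := hz
    obtain ⟨q, hq, hqw⟩ := hw
    refine ⟨p * q, by simpa using hp.mul hq, ?_⟩
    have hadd : f (p * q) * (z + w) = f q * (f p * z) + f p * (f q * w) := by
      rw [map_mul]
      ring
    exact hadd ▸ (f.isIntegralElem_map.mul f hpz).add f (f.isIntegralElem_map.mul f hqw)
  | tmul l a =>
    obtain ⟨p, hp, hpa⟩ := exists_aeval_ne_zero_and_isIntegralElem_aeval_mul hx a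
    have hfp : f (MvPolynomial.map (algebraMap k L) p) = 1 ⊗ₜ MvPolynomial.aeval x p :=
      RingHom.congr_fun hf p
    refine ⟨MvPolynomial.map (algebraMap k L) p, ?_, ?_⟩
    · exact hfp ▸ hp.isUnit.map (Algebra.TensorProduct.includeRight (R := k) (A := L))
    have hright : f.IsIntegralElem (1 ⊗ₜ (MvPolynomial.aeval x p * a)) :=
      .of_comp (hf ▸ hpa.map _)
    have hmul : f (MvPolynomial.map (algebraMap k L) p) * l ⊗ₜ a =
        f (MvPolynomial.C l) * 1 ⊗ₜ (MvPolynomial.aeval x p * a) := by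
      rw [hfp]
      simp [f]
    exact hmul ▸ f.isIntegralElem_map.mul f hright

theorem isCohenMacaulayAtPrimes_tensorProduct_of_field (k L K : Type*) [Field k] [Field L]
    [Field K] [Algebra k L] [Algebra k K] [IsNoetherianRing (L ⊗[k] K)] :
    IsCohenMacaulayAtPrimes (L ⊗[k] K) := by
  intro Q _
  obtain ⟨ι, x, hx⟩ := exists_isTranscendenceBasis' k K
  let f := (MvPolynomial.aeval (R := L) fun i ↦ (1 : L) ⊗ₜ[k] x i).toRingHom
  obtain ⟨V, hV⟩ := exists_finset_map_le_map_comap_rename f (Q.comap f)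
  let fV := (MvPolynomial.aeval (R := L) fun i : V ↦ (1 : L) ⊗ₜ[k] x i).toRingHom
  have hfV : f.comp (MvPolynomial.rename ((↑) : V → ι)).toRingHom = fV :=
    RingHom.ext fun p ↦ MvPolynomial.aeval_rename ..
  rw [hfV, Ideal.comap_comap, hfV] at hV
  have hQ : Q ∈ ((Q.comap fV).map fV).minimalPrimes := by
    refine ⟨⟨‹_›, Ideal.map_comap_le⟩, fun P ⟨_, hP⟩ hPQ ↦ ?_⟩
    exact le_of_comap_le_of_exists_isIntegralElem_mul
      (exists_isUnit_and_isIntegralElem_aeval_one_tmul hx) hPQ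
      (Ideal.map_le_iff_le_comap.mp (hV.trans hP))
  exact isCohenMacaulayLocalRing_localization_of_flat_of_mem_minimalPrimes
    (flat_aeval_one_tmul_of_algebraicIndependent L (hx.1.comp _ Subtype.val_injective)) hQ
    ((IsCohenMacaulayAtPrimes.of_field L).mvPolynomial _)

end TensorProductOfFields

section FlatnessCriterion

theorem mem_ideal_smul_top_pi_iff {R ι : Type*} [CommRing R] [Finite ι] {I : Ideal R}
    {x : ι → R} : x ∈ I • (⊤ : Submodule R (ι → R)) ↔ ∀ i, x i ∈ I := by
  classical
  have := Fintype.ofFinite ι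
  refine ⟨fun hx i ↦ ?_, fun hx ↦ ?_⟩
  · refine Submodule.smul_induction_on hx (fun r hr y _ ↦ I.mul_mem_right _ hr) fun y z hy hz ↦ ?_
    exact I.add_mem hy hz
  · rw [pi_eq_sum_univ' x]
    exact Submodule.sum_mem _ fun i _ ↦ Submodule.smul_mem_smul (hx i) trivial

theorem exists_comap_pow_add_smul_top_le_ker_sup {R M N : Type*} [CommRing R] [IsNoetherianRing R]
    [AddCommGroup M] [Module R M] [AddCommGroup N] [Module R N] [Module.Finite R N] (I : Ideal R)
    (g : M →ₗ[R] N) :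
    ∃ c, ∀ s, (I ^ (s + c) • (⊤ : Submodule R N)).comap g ≤ g.ker ⊔ I ^ s • ⊤ := by
  obtain ⟨c, hc⟩ := I.exists_pow_inf_eq_pow_smul g.range
  refine ⟨c, fun s x hx ↦ ?_⟩
  have hgx : g x ∈ (I ^ s • (⊤ : Submodule R M)).map g := by
    have hmem : g x ∈ I ^ (s + c) • ⊤ ⊓ g.range := ⟨hx, g.mem_range_self x⟩
    rw [hc _ (Nat.le_add_left c s), Nat.add_sub_cancel] at hmem
    rw [Submodule.map_smul'', Submodule.map_top]
    exact Submodule.smul_mono le_rfl inf_le_right hmem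
  obtain ⟨y, hy, hyx⟩ := hgx
  exact Submodule.mem_sup.mpr
    ⟨x - y, by simp [LinearMap.mem_ker, hyx], y, hy, sub_add_cancel x y⟩

theorem iInf_sup_pow_smul_top_eq_of_le_jacobson {S M : Type*} [CommRing S] [IsNoetherianRing S]
    [AddCommGroup M] [Module S M] [Module.Finite S M] {J : Ideal S}
    (hJ : J ≤ (⊥ : Ideal S).jacobson) (N : Submodule S M) : ⨅ s, N ⊔ J ^ s • ⊤ = N := by
  have hcomap (s : ℕ) : (J ^ s • (⊤ : Submodule S (M ⧸ N))).comap N.mkQ = N ⊔ J ^ s • ⊤ := by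
    rw [← Submodule.range_mkQ N, ← Submodule.map_top, ← Submodule.map_smul'',
      Submodule.comap_map_mkQ]
  simp_rw [← hcomap, ← Submodule.comap_iInf, J.iInf_pow_smul_eq_bot_of_le_jacobson hJ,
    Submodule.comap_bot, Submodule.ker_mkQ]

variable {R S ι : Type*} [CommRing R] [CommRing S] [Fintype ι] {f : R →+* S}

/-- The `S`-submodule of `S ^ ι` generated by the images under `f` of the syzygies modulo `I` of the
family `r`, i.e. of the vectors `a` in `R ^ ι` such that `∑ i, a i * r i` lies in `I`. For `I = ⊥`
these are the syzygies of `r`, and `f` is flat iff every syzygy of `f ∘ r` is in their span. -/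
def syzygySpan (f : R →+* S) (I : Ideal R) (r : ι → R) : Submodule S (ι → S) :=
  Submodule.span S ((f ∘ ·) '' (Submodule.comap (Fintype.linearCombination R r) I : Set (ι → R)))

theorem flat_of_forall_mem_syzygySpan
    (h : ∀ (l : ℕ) (r : Fin l → R) (x : Fin l → S), ∑ i, f (r i) * x i = 0 →
      x ∈ syzygySpan f ⊥ r) : f.Flat := by
  algebraize [f]
  refine Module.Flat.iff_forall_isTrivialRelation.mpr fun {l r x} hx ↦ ?_
  obtain ⟨n, y, g, hg⟩ := Submodule.mem_span_set'.mp (h l r x hx)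
  choose a ha hag using fun j ↦ (g j).2
  refine ⟨n, fun i j ↦ a j i, y, fun i ↦ ?_, fun j ↦ ?_⟩
  · simp [← hg, ← hag, Algebra.smul_def, mul_comm, RingHom.algebraMap_toAlgebra]
  · simpa [Fintype.linearCombination_apply, mul_comm] using ha j

theorem exists_eq_sum_of_flat_of_sum_mul_eq_zero (hf : f.Flat)
    {r : ι → R} {x : ι → S} (hx : ∑ i, f (r i) * x i = 0) :
    ∃ (n : ℕ) (a : Fin n → ι → R) (y : Fin n → S),
      (∀ i, x i = ∑ j, f (a j i) * y j) ∧ ∀ j, ∑ i, r i * a j i = 0 := by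
  algebraize [f]
  obtain ⟨n, a, y, hxy, ha⟩ := Module.Flat.isTrivialRelation_of_sum_smul_eq_zero (R := R) hx
  exact ⟨n, fun j i ↦ a i j, y, hxy, ha⟩

theorem mem_syzygySpan_sup_of_flat_quotient {I : Ideal R} {T : Type*} [CommRing T] {φ : S →+* T}
    (hφ : Function.Surjective φ) {ψ : R ⧸ I →+* T} (hψ : ψ.Flat)
    (hφψ : φ.comp f = ψ.comp (Ideal.Quotient.mk I)) {r : ι → R} {x : ι → S}
    (hx : ∑ i, f (r i) * x i = 0) :
    x ∈ syzygySpan f I r ⊔ RingHom.ker φ • ⊤ := by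
  replace hφψ (a : R) : φ (f a) = ψ (Ideal.Quotient.mk I a) := RingHom.congr_fun hφψ a
  have hrel : ∑ i, ψ (Ideal.Quotient.mk I (r i)) * φ (x i) = 0 := by
    simpa [hφψ] using congr_arg φ hx
  obtain ⟨n, a, y, hxy, ha⟩ := exists_eq_sum_of_flat_of_sum_mul_eq_zero hψ hrel
  choose a' ha' using fun j i ↦ Ideal.Quotient.mk_surjective (a j i)
  choose y' hy' using fun j ↦ hφ (y j)
  have hcomb : ∑ j, y' j • f ∘ a' j ∈ syzygySpan f I r := by
    refine Submodule.sum_mem _ fun j _ ↦ Submodule.smul_mem _ _ <|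
      Submodule.subset_span ⟨_, ?_, rfl⟩
    simpa [Fintype.linearCombination_apply, mul_comm, ← Ideal.Quotient.eq_zero_iff_mem, ha']
      using ha j
  have hsub : x - ∑ j, y' j • f ∘ a' j ∈ RingHom.ker φ • (⊤ : Submodule S (ι → S)) := by
    rw [mem_ideal_smul_top_pi_iff]
    intro i
    simp [RingHom.mem_ker, hφψ, ha', hy', hxy, mul_comm]
  rw [← add_sub_cancel (∑ j, y' j • f ∘ a' j) x]
  exact Submodule.add_mem_sup hcomb hsub

theorem exists_syzygySpan_pow_add_le [IsNoetherianRing R] {I : Ideal R} {J : Ideal S}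
    (hIJ : I.map f ≤ J) (r : ι → R) :
    ∃ c, ∀ s, syzygySpan f (I ^ (s + c)) r ≤ syzygySpan f ⊥ r ⊔ J ^ s • ⊤ := by
  obtain ⟨c, hc⟩ := exists_comap_pow_add_smul_top_le_ker_sup I (Fintype.linearCombination R r)
  refine ⟨c, fun s ↦ Submodule.span_le.mpr ?_⟩
  rintro _ ⟨a, ha, rfl⟩
  obtain ⟨b, hb, d, hd, rfl⟩ := Submodule.mem_sup.mp (hc s (by simpa using ha))
  have hadd : f ∘ (b + d) = f ∘ b + f ∘ d := funext fun i ↦ map_add f _ _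
  change f ∘ (b + d) ∈ _
  rw [hadd]
  refine Submodule.add_mem_sup (Submodule.subset_span ⟨b, hb, rfl⟩) ?_
  rw [mem_ideal_smul_top_pi_iff] at hd ⊢
  exact fun i ↦ Ideal.pow_right_mono hIJ s (Ideal.map_pow f I s ▸ Ideal.mem_map_of_mem f (hd i))

theorem flat_of_forall_flat_quotient_pow [IsNoetherianRing R] [IsNoetherianRing S] {I : Ideal R}
    {J : Ideal S} (hJ : J ≤ (⊥ : Ideal S).jacobson) (hIJ : I.map f ≤ J) {T : ℕ → Type*}
    [∀ s, CommRing (T s)] {φ : ∀ s, S →+* T s} (hφ : ∀ s, Function.Surjective (φ s))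
    (hker : ∀ s, RingHom.ker (φ s) ≤ J ^ s) {ψ : ∀ s, R ⧸ I ^ s →+* T s}
    (hψ : ∀ s, (ψ s).Flat)
    (hφψ : ∀ s, (φ s).comp f = (ψ s).comp (Ideal.Quotient.mk (I ^ s))) : f.Flat := by
  refine flat_of_forall_mem_syzygySpan fun l r x hx ↦ ?_
  rw [← iInf_sup_pow_smul_top_eq_of_le_jacobson hJ (syzygySpan f ⊥ r), Submodule.mem_iInf]
  intro s
  obtain ⟨c, hc⟩ := exists_syzygySpan_pow_add_le hIJ r
  have hker' : RingHom.ker (φ (s + c)) ≤ J ^ s :=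
    (hker _).trans (Ideal.pow_le_pow_right (Nat.le_add_right s c))
  have hle : syzygySpan f (I ^ (s + c)) r ⊔ RingHom.ker (φ (s + c)) • ⊤ ≤
      syzygySpan f ⊥ r ⊔ J ^ s • ⊤ :=
    sup_le (hc s) (le_sup_of_le_right (Submodule.smul_mono hker' le_rfl))
  exact hle (mem_syzygySpan_sup_of_flat_quotient (hφ _) (hψ _) (hφψ _) hx)

end FlatnessCriterion

section Completion

theorem map_algebraMap_le_jacobson_adicCompletion {C : Type*} [CommRing C] {r : Ideal C}
    (hr : r.FG) : r.map (algebraMap C (AdicCompletion r C)) ≤ (⊥ : Ideal _).jacobson := by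
  have := AdicCompletion.isAdicComplete_self r hr
  exact IsAdicComplete.le_jacobson_bot _

theorem ker_evalₐ_eq_map_pow {C : Type*} [CommRing C] {r : Ideal C} (hr : r.FG) (t : ℕ) :
    RingHom.ker (AdicCompletion.evalₐ r t) =
      (r ^ t).map (algebraMap C (AdicCompletion r C)) := by
  ext x
  rw [← Submodule.restrictScalars_mem C, ← Submodule.restrictScalars_mem C (Ideal.map _ _),
    ← Ideal.smul_top_eq_map, AdicCompletion.pow_smul_top_eq_ker_eval hr,
    Submodule.restrictScalars_mem, RingHom.mem_ker, LinearMap.mem_ker]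
  exact EmbeddingLike.map_eq_zero_iff (f := Ideal.quotientEquivAlgOfEq C (Ideal.mul_top (r ^ t)))

theorem exists_adicCompletion_lift_ker_eq {C D : Type*} [CommRing C] [CommRing D] {r : Ideal C}
    (hr : r.FG) {g : C →+* D} (hg : Function.Surjective g) {t : ℕ} (ht : r ^ t ≤ RingHom.ker g) :
    ∃ π : AdicCompletion r C →+* D, π.comp (algebraMap C (AdicCompletion r C)) = g ∧
      Function.Surjective π ∧
      RingHom.ker π = (RingHom.ker g).map (algebraMap C (AdicCompletion r C)) := by
  have hgr : ∀ c ∈ r ^ t, g c = 0 := fun _ hc ↦ ht hc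
  let ε := (AdicCompletion.evalₐ r t).toRingHom
  have hε : Function.Surjective ε := AdicCompletion.surjective_evalₐ r t
  have hε_of : ε.comp (algebraMap C (AdicCompletion r C)) = Ideal.Quotient.mk (r ^ t) :=
    (AdicCompletion.evalₐ r t).comp_algebraMap
  have hker : RingHom.ker ε = (r ^ t).map (algebraMap C (AdicCompletion r C)) :=
    ker_evalₐ_eq_map_pow hr t
  have hlift : RingHom.ker (Ideal.Quotient.lift (r ^ t) g hgr) =
      (RingHom.ker g).map (Ideal.Quotient.mk (r ^ t)) := Ideal.ker_quotient_lift g ht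
  refine ⟨(Ideal.Quotient.lift (r ^ t) g hgr).comp ε, ?_,
    (Ideal.Quotient.lift_surjective_of_surjective _ hgr hg).comp hε, ?_⟩
  · rw [RingHom.comp_assoc, hε_of, Ideal.Quotient.lift_comp_mk]
  · rw [← RingHom.comap_ker, hlift, ← hε_of, ← Ideal.map_map,
      Ideal.comap_map_of_surjective' _ hε, hker, sup_eq_left]
    exact Ideal.map_mono ht

variable (k : Type*) {A B : Type*} [Field k] [CommRing A] [CommRing B] [Algebra k A] [Algebra k B]

/-- The ideal `m ⊗ B + A ⊗ n` of `A ⊗[k] B`, for arbitrary ideals `m` of `A` and `n` of `B`;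
`tensorRadical k A B` is the case of the Jacobson radicals. -/
noncomputable def tensorIdeal (m : Ideal A) (n : Ideal B) : Ideal (A ⊗[k] B) :=
  m.map (Algebra.TensorProduct.includeLeft (R := k) (S := k) (A := A) (B := B)) ⊔
    n.map (Algebra.TensorProduct.includeRight (R := k) (A := A) (B := B))

variable (A B) in
theorem tensorRadical_eq_tensorIdeal :
    tensorRadical k A B = tensorIdeal k (⊥ : Ideal A).jacobson (⊥ : Ideal B).jacobson := rfl

variable (m : Ideal A) (n : Ideal B)

/-- The canonical map from `A` to the completion of `A ⊗[k] B` at `tensorIdeal k m n`. -/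
noncomputable def completionLeft : A →+* AdicCompletion (tensorIdeal k m n) (A ⊗[k] B) :=
  (algebraMap _ _).comp
    (Algebra.TensorProduct.includeLeftRingHom (R := k) (A := A) (B := B))

/-- The canonical map from `B` to the completion of `A ⊗[k] B` at `tensorIdeal k m n`. -/
noncomputable def completionRight : B →+* AdicCompletion (tensorIdeal k m n) (A ⊗[k] B) :=
  (algebraMap _ _).comp (Algebra.TensorProduct.includeRight (R := k) (A := A) (B := B)).toRingHom

variable {m n}

theorem tensorIdeal_fg (hm : m.FG) (hn : n.FG) : (tensorIdeal k m n).FG :=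
  Submodule.FG.sup (hm.map _) (hn.map _)

theorem tensorIdeal_mono {m' : Ideal A} {n' : Ideal B} (hm : m ≤ m') (hn : n ≤ n') :
    tensorIdeal k m n ≤ tensorIdeal k m' n' :=
  sup_le_sup (Ideal.map_mono hm) (Ideal.map_mono hn)

theorem tensorIdeal_pow_add_le (s t : ℕ) :
    tensorIdeal k m n ^ (s + t) ≤ tensorIdeal k (m ^ s) (n ^ t) := by
  rw [tensorIdeal, tensorIdeal, Ideal.map_pow, Ideal.map_pow]
  exact Ideal.sup_pow_add_le_pow_sup_pow

theorem map_algebraMap_tensorIdeal (I : Ideal A) (J : Ideal B) :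
    (tensorIdeal k I J).map (algebraMap _ (AdicCompletion (tensorIdeal k m n) (A ⊗[k] B))) =
      I.map (completionLeft k m n) ⊔ J.map (completionRight k m n) := by
  refine (Ideal.map_sup _ _ _).trans (congr_arg₂ _ ?_ ?_)
  · exact Ideal.map_map Algebra.TensorProduct.includeLeftRingHom _
  · exact Ideal.map_map Algebra.TensorProduct.includeRight.toRingHom _

variable {k}

theorem exists_completion_lift_ker_eq (hm : m.FG) (hn : n.FG) {I : Ideal A} {J : Ideal B} {t : ℕ}
    (ht : tensorIdeal k m n ^ t ≤ tensorIdeal k I J) :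
    ∃ π : AdicCompletion (tensorIdeal k m n) (A ⊗[k] B) →+* (A ⧸ I) ⊗[k] (B ⧸ J),
      Function.Surjective π ∧
      RingHom.ker π = I.map (completionLeft k m n) ⊔ J.map (completionRight k m n) ∧
      π.comp (completionLeft k m n) =
        Algebra.TensorProduct.includeLeftRingHom.comp (Ideal.Quotient.mk I) ∧
      π.comp (completionRight k m n) =
        Algebra.TensorProduct.includeRight.toRingHom.comp (Ideal.Quotient.mk J) := by
  let g := Algebra.TensorProduct.map (Ideal.Quotient.mkₐ k I) (Ideal.Quotient.mkₐ k J)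
  have hg : Function.Surjective g :=
    TensorProduct.map_surjective Ideal.Quotient.mk_surjective Ideal.Quotient.mk_surjective
  have hker : RingHom.ker g.toRingHom = tensorIdeal k I J := by
    refine (Algebra.TensorProduct.map_ker _ _ Ideal.Quotient.mk_surjective
      Ideal.Quotient.mk_surjective).trans ?_
    exact congr_arg₂ (tensorIdeal k) (Ideal.Quotient.mkₐ_ker k I) (Ideal.Quotient.mkₐ_ker k J)
  obtain ⟨π, hπg, hπ, hπker⟩ :=
    exists_adicCompletion_lift_ker_eq (tensorIdeal_fg k hm hn) (g := g.toRingHom) hg (hker ▸ ht)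
  refine ⟨π, hπ, by rw [hπker, hker, map_algebraMap_tensorIdeal], ?_, ?_⟩
  · rw [completionLeft, ← RingHom.comp_assoc, hπg]
    ext a
    simp [g]
  · rw [completionRight, ← RingHom.comp_assoc, hπg]
    ext b
    simp [g]

theorem exists_quotient_map_completionLeft_lift_ker_eq (hm : m.FG) (hn : n.FG) {I : Ideal A}
    {J : Ideal B} {t : ℕ} (ht : tensorIdeal k m n ^ t ≤ tensorIdeal k I J) :
    ∃ π : AdicCompletion (tensorIdeal k m n) (A ⊗[k] B) ⧸ I.map (completionLeft k m n) →+*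
        (A ⧸ I) ⊗[k] (B ⧸ J),
      Function.Surjective π ∧
      RingHom.ker π = J.map ((Ideal.Quotient.mk _).comp (completionRight k m n)) ∧
      π.comp ((Ideal.Quotient.mk _).comp (completionRight k m n)) =
        Algebra.TensorProduct.includeRight.toRingHom.comp (Ideal.Quotient.mk J) := by
  obtain ⟨π, hπ, hker, -, hright⟩ := exists_completion_lift_ker_eq hm hn ht
  have hI : ∀ e ∈ I.map (completionLeft k m n), π e = 0 := fun e he ↦
    RingHom.mem_ker.mp (hker ▸ Ideal.mem_sup_left he)
  refine ⟨Ideal.Quotient.lift _ π hI,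
    Ideal.Quotient.lift_surjective_of_surjective _ hI hπ, ?_, ?_⟩
  · refine (Ideal.ker_quotient_lift π hI).trans ?_
    rw [hker, Ideal.map_sup, Ideal.map_quotient_self, bot_sup_eq, Ideal.map_map]
  · rw [← RingHom.comp_assoc, Ideal.Quotient.lift_comp_mk, hright]

theorem le_comap_completion_of_isMaximal (hm : m.FG) (hn : n.FG)
    (Q : Ideal (AdicCompletion (tensorIdeal k m n) (A ⊗[k] B))) (hQ : Q.IsMaximal) :
    m ≤ Q.comap (completionLeft k m n) ∧ n ≤ Q.comap (completionRight k m n) := by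
  rw [← Ideal.map_le_iff_le_comap, ← Ideal.map_le_iff_le_comap, ← sup_le_iff,
    ← map_algebraMap_tensorIdeal]
  exact (map_algebraMap_le_jacobson_adicCompletion (tensorIdeal_fg k hm hn)).trans
    (sInf_le ⟨bot_le, hQ⟩)

variable (k A B) in
theorem flat_includeLeftRingHom :
    (Algebra.TensorProduct.includeLeftRingHom (R := k) (A := A) (B := B)).Flat :=
  RingHom.flat_algebraMap_iff.mpr inferInstance

variable (k A B) in
theorem flat_includeRight :
    (Algebra.TensorProduct.includeRight (R := k) (A := A) (B := B)).toRingHom.Flat := by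
  have hcomm : (Algebra.TensorProduct.includeRight (R := k) (A := A) (B := B)).toRingHom =
      (Algebra.TensorProduct.comm k B A).toAlgHom.toRingHom.comp
        Algebra.TensorProduct.includeLeftRingHom := by
    ext b
    simp
  rw [hcomm]
  exact (flat_includeLeftRingHom k B A).comp <|
    .of_bijective (Algebra.TensorProduct.comm k B A).bijective

theorem flat_completionLeft [IsNoetherianRing A]
    [IsNoetherianRing (AdicCompletion (tensorIdeal k m n) (A ⊗[k] B))] (hn : n.FG) :
    (completionLeft k m n).Flat := by
  have hm := m.fg_of_isNoetherianRing
  choose π hπ hker hleft _ using fun s ↦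
    exists_completion_lift_ker_eq hm hn (tensorIdeal_pow_add_le k s s)
  refine flat_of_forall_flat_quotient_pow
    (map_algebraMap_le_jacobson_adicCompletion (tensorIdeal_fg k hm hn)) ?_ hπ (fun s ↦ ?_)
    (fun s ↦ flat_includeLeftRingHom k _ _) hleft
  · rw [map_algebraMap_tensorIdeal]
    exact le_sup_left
  · rw [hker, Ideal.map_pow, Ideal.map_pow, map_algebraMap_tensorIdeal]
    exact sup_le (Ideal.pow_right_mono le_sup_left s) (Ideal.pow_right_mono le_sup_right s)

theorem flat_mk_comp_completionRight [IsNoetherianRing B]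
    [IsNoetherianRing (AdicCompletion (tensorIdeal k m n) (A ⊗[k] B))] (hm : m.FG)
    {I : Ideal A} (hmI : m ≤ I) :
    ((Ideal.Quotient.mk (I.map (completionLeft k m n))).comp (completionRight k m n)).Flat := by
  have hn := n.fg_of_isNoetherianRing
  have hpow (s : ℕ) : tensorIdeal k m n ^ (1 + s) ≤ tensorIdeal k I (n ^ s) :=
    (tensorIdeal_pow_add_le k 1 s).trans (tensorIdeal_mono k (by simpa using hmI) le_rfl)
  choose π hπ hker hright using fun s ↦
    exists_quotient_map_completionLeft_lift_ker_eq hm hn (hpow s)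
  have hjac : n.map ((Ideal.Quotient.mk (I.map (completionLeft k m n))).comp
      (completionRight k m n)) ≤ (⊥ : Ideal _).jacobson := by
    rw [← Ideal.map_map, Ideal.map_le_iff_le_comap,
      Ideal.comap_jacobson_of_surjective Ideal.Quotient.mk_surjective]
    refine le_trans ?_ (Ideal.jacobson_mono bot_le)
    refine le_trans ?_ (map_algebraMap_le_jacobson_adicCompletion (tensorIdeal_fg k hm hn))
    rw [map_algebraMap_tensorIdeal]
    exact le_sup_right
  exact flat_of_forall_flat_quotient_pow hjac le_rfl hπ
    (fun s ↦ by rw [hker, Ideal.map_pow]) (fun s ↦ flat_includeRight k _ _) hright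

end Completion

section Assembly

variable {k A B : Type*} [Field k] [CommRing A] [CommRing B] [Algebra k A] [Algebra k B]
  {m : Ideal A} {n : Ideal B} [IsNoetherianRing B]
  [IsNoetherianRing (AdicCompletion (tensorIdeal k m n) (A ⊗[k] B))]

theorem isCohenMacaulayLocalRing_localization_quotient_map_completionLeft
    (hB : IsCohenMacaulayRing B) (hm : m.FG) {p : Ideal A} (hp : p.IsMaximal) (hmp : m ≤ p)
    (Q : Ideal (AdicCompletion (tensorIdeal k m n) (A ⊗[k] B) ⧸ p.map (completionLeft k m n)))
    [Q.IsPrime] (hQ : (Q.comap ((Ideal.Quotient.mk _).comp (completionRight k m n))).IsMaximal)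
    (hnQ : n ≤ Q.comap ((Ideal.Quotient.mk _).comp (completionRight k m n))) :
    IsCohenMacaulayLocalRing (Localization.AtPrime Q) := by
  let q := Q.comap ((Ideal.Quotient.mk _).comp (completionRight k m n))
  have hq : q.IsMaximal := hQ
  let _ := Ideal.Quotient.field p
  let _ := Ideal.Quotient.field q
  have hpow : tensorIdeal k m n ^ 1 ≤ tensorIdeal k p q :=
    (pow_one _).trans_le (tensorIdeal_mono k hmp hnQ)
  obtain ⟨π, hπ, hker, -⟩ :=
    exists_quotient_map_completionLeft_lift_ker_eq hm n.fg_of_isNoetherianRing hpow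
  have : IsNoetherianRing ((A ⧸ p) ⊗[k] (B ⧸ q)) := isNoetherianRing_of_surjective _ _ π hπ
  exact isCohenMacaulayLocalRing_localization_of_flat (flat_mk_comp_completionRight hm hmp) hπ Q
    hker (hB q hq) fun Q' _ _ ↦ isCohenMacaulayAtPrimes_tensorProduct_of_field k _ _ Q'

theorem isCohenMacaulayLocalRing_localization_adicCompletion_tensorIdeal [IsNoetherianRing A]
    (hA : IsCohenMacaulayRing A) (hB : IsCohenMacaulayRing B)
    (Q : Ideal (AdicCompletion (tensorIdeal k m n) (A ⊗[k] B))) [Q.IsPrime]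
    (hp : (Q.comap (completionLeft k m n)).IsMaximal) (hmp : m ≤ Q.comap (completionLeft k m n))
    (hq : (Q.comap (completionRight k m n)).IsMaximal) (hnq : n ≤ Q.comap (completionRight k m n)) :
    IsCohenMacaulayLocalRing (Localization.AtPrime Q) := by
  refine isCohenMacaulayLocalRing_localization_of_flat
    (flat_completionLeft n.fg_of_isNoetherianRing) Ideal.Quotient.mk_surjective Q Ideal.mk_ker
    (hA _ hp) fun Q' _ hQ' ↦ ?_
  have hcomap : Q'.comap ((Ideal.Quotient.mk _).comp (completionRight k m n)) =
      Q.comap (completionRight k m n) := by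
    rw [← Ideal.comap_comap, hQ']
  exact isCohenMacaulayLocalRing_localization_quotient_map_completionLeft hB
    m.fg_of_isNoetherianRing hp hmp Q' (hcomap ▸ hq) (hcomap ▸ hnq)

end Assembly

theorem isMaximal_of_jacobson_bot_le {R : Type*} [CommRing R]
    (hR : {P : Ideal R | P.IsMaximal}.Finite) {p : Ideal R} [hp : p.IsPrime]
    (hle : (⊥ : Ideal R).jacobson ≤ p) : p.IsMaximal := by
  have hinf : hR.toFinset.inf id ≤ p :=
    le_trans (le_sInf fun M hM ↦ Finset.inf_le (f := id) (by simpa using hM.2)) hle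
  obtain ⟨M, hM, hMp⟩ := hp.inf_le'.mp hinf
  have hMmax : M.IsMaximal := by simpa using hM
  exact hMmax.eq_of_le hp.ne_top hMp ▸ hMmax

theorem isCohenMacaulayRing_completedTensor_general {k A B : Type*} [Field k]
    [CommRing A] [CommRing B] [IsNoetherianRing A] [IsNoetherianRing B] [Algebra k A] [Algebra k B]
    (m : Ideal A) (n : Ideal B)
    (hm : ∀ p : Ideal A, p.IsPrime → m ≤ p → p.IsMaximal)
    (hn : ∀ q : Ideal B, q.IsPrime → n ≤ q → q.IsMaximal)
    (hE : IsNoetherianRing (AdicCompletion (tensorIdeal k m n) (A ⊗[k] B)))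
    (hA : IsCohenMacaulayRing A) (hB : IsCohenMacaulayRing B) :
    IsCohenMacaulayRing (AdicCompletion (tensorIdeal k m n) (A ⊗[k] B)) := by
  intro Q hQ
  have : Q.IsPrime := hQ.isPrime
  obtain ⟨hmp, hnq⟩ :=
    le_comap_completion_of_isMaximal m.fg_of_isNoetherianRing n.fg_of_isNoetherianRing Q hQ
  exact isCohenMacaulayLocalRing_localization_adicCompletion_tensorIdeal hA hB Q
    (hm _ inferInstance hmp) hmp (hn _ inferInstance hnq) hnq

/-- Let `A` and `B` be two semilocal Noetherian commutative rings
containing a field `k` such that the completed tensor product `A ⊗̂[k] B` is Noetherian.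
If `A` and `B` are Cohen–Macaulay, then so is `A ⊗̂[k] B`. -/
theorem isCohenMacaulayRing_completedTensor (k A B : Type*) [Field k]
    [CommRing A] [CommRing B] [IsNoetherianRing A] [IsNoetherianRing B]
    [Algebra k A] [Algebra k B]
    (hsemiA : {P : Ideal A | P.IsMaximal}.Finite)
    (hsemiB : {P : Ideal B | P.IsMaximal}.Finite)
    (hE : IsNoetherianRing (CompletedTensor k A B))
    (hA : IsCohenMacaulayRing A) (hB : IsCohenMacaulayRing B) :
    IsCohenMacaulayRing (CompletedTensor k A B) := by
  unfold CompletedTensor at hE ⊢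
  rw [tensorRadical_eq_tensorIdeal] at hE ⊢
  exact isCohenMacaulayRing_completedTensor_general _ _
    (fun _ _ ↦ isMaximal_of_jacobson_bot_le hsemiA) (fun _ _ ↦ isMaximal_of_jacobson_bot_le hsemiB)
    hE hA hB
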